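/- arXiv:2407.21456 — 2 statements merged into one kernel-verified Lean document; each statement's English description precedes it below -/
import Mathlib

section
/- For any bounded measurable weight function a: ℝ^{d_Y}×ℝ^{d_Z} → [0,∞) that is positive on the support of p_{Y,Z}, the conditional ball divergence satisfies ζ_a(X,Y|Z) ≥ 0, and ζ_a(X,Y|Z) = 0 if and only if X and Y are conditionally independent given Z. -/
open MeasureTheory ProbabilityTheory Filter
open scoped ENNReal NNReal Topology

noncomputable section

/-- `ℝ^d` with the Euclidean norm. -/
abbrev Euc (d : ℕ) : Type := EuclideanSpace ℝ (Fin d)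

/-- The ball divergence `Θ²(P, Q)` between two Borel measures on `ℝ^d`:
`∫∫ ((P - Q)(B̄(u, ‖v - u‖)))² [dP(u)dP(v) + dQ(u)dQ(v)]`. -/
def ballDiv {d : ℕ} (P Q : Measure (Euc d)) : ℝ :=
  (∫ u, ∫ v, ((P (Metric.closedBall u (dist v u))).toReal
      - (Q (Metric.closedBall u (dist v u))).toReal) ^ 2 ∂P ∂P)
  + (∫ u, ∫ v, ((P (Metric.closedBall u (dist v u))).toReal
      - (Q (Metric.closedBall u (dist v u))).toReal) ^ 2 ∂Q ∂Q)

/-- The `(Y, Z)`-marginal density `p_{Y,Z}`. -/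
def margYZ {dX dY dZ : ℕ} (p : Euc dX → Euc dY → Euc dZ → ℝ) (y : Euc dY) (z : Euc dZ) : ℝ :=
  ∫ x, p x y z

/-!
The divergence integrand is nonnegative and the weight is almost surely positive, so the integral
vanishes exactly when almost surely `Θ²(P_{X|Y,Z}, P_{X|Z}) = 0`, that is, `P_{X|Y,Z} = P_{X|Z}`,
which is conditional independence.

That `Θ²(P, Q) = 0` forces `P = Q` comes from the Besicovitch differentiation theorem: for
`P`-almost every `u`, the balls `B̄(u, ‖u - v‖)` with `v` distributed as `P` include arbitrarily
small ones on which `P` and `Q` agree, so `dQ/dP = 1` holds `P`-almost everywhere. Hence `P ≤ Q`,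
and both have total mass one.
-/

section Balls

variable {E : Type*} [MetricSpace E] [MeasurableSpace E]

theorem tendsto_measure_closedBall_nhdsGT_zero [OpensMeasurableSpace E] (P : Measure E)
    [IsLocallyFiniteMeasure P] (u : E) :
    Tendsto (fun r ↦ P (Metric.closedBall u r)) (𝓝[>] 0) (𝓝 (P {u})) := by
  obtain ⟨s, hs, hPs⟩ := P.finiteAt_nhds u
  obtain ⟨R, hR, hball⟩ := Metric.nhds_basis_closedBall.mem_iff.1 hs
  have hfin : P (Metric.cthickening R {u}) ≠ ∞ := by
    rw [Metric.cthickening_singleton u hR.le]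
    exact ((measure_mono hball).trans_lt hPs).ne
  refine ((tendsto_measure_cthickening_of_isClosed ⟨R, hR, hfin⟩ isClosed_singleton).mono_left
    nhdsWithin_le_nhds).congr' ?_
  filter_upwards [self_mem_nhdsWithin] with r hr
  rw [Metric.cthickening_singleton u (le_of_lt hr)]

theorem frequently_nhdsGT_zero_of_ae_dist {P : Measure E} {u : E} (hu : u ∈ P.support)
    (hatom : P {u} = 0) {p : ℝ → Prop} (hp : ∀ᵐ v ∂P, p (dist v u)) :
    ∃ᶠ r in 𝓝[>] (0 : ℝ), p r := by
  intro hnot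
  obtain ⟨ε, hε, hball⟩ := mem_nhdsGT_iff_exists_Ioo_subset.1 hnot
  have hne : ∀ᵐ v ∂P, v ≠ u := compl_mem_ae_iff.2 hatom
  have hnull : P (Metric.ball u ε) = 0 := by
    rw [measure_eq_zero_iff_ae_notMem]
    filter_upwards [hp, hne] with v hpv hvu hv
    exact hball ⟨dist_pos.2 hvu, hv⟩ hpv
  exact ((Measure.mem_support_iff_forall u).1 hu _ (Metric.ball_mem_nhds u hε)).ne' hnull

variable [BorelSpace E] [SecondCountableTopology E] [HasBesicovitchCovering E]
  {P Q : Measure E}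

theorem rnDeriv_ae_eq_one_of_ae_measure_closedBall_eq [IsFiniteMeasure P] [IsFiniteMeasure Q]
    (h : ∀ᵐ u ∂P, ∀ᵐ v ∂P,
      P (Metric.closedBall u (dist v u)) = Q (Metric.closedBall u (dist v u))) :
    Q.rnDeriv P =ᵐ[P] 1 := by
  filter_upwards [Besicovitch.ae_tendsto_rnDeriv Q P, P.support_mem_ae, h] with u hlim hu hball
  rcases eq_or_ne (P {u}) 0 with hatom | hatom
  · have hpos (r : ℝ) (hr : 0 < r) : P (Metric.closedBall u r) ≠ 0 :=
      ((Measure.mem_support_iff_forall u).1 hu _ (Metric.closedBall_mem_nhds u hr)).ne'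
    have hfreq : ∃ᶠ r in 𝓝[>] (0 : ℝ), P (Metric.closedBall u r) = Q (Metric.closedBall u r) :=
      frequently_nhdsGT_zero_of_ae_dist hu hatom hball
    refine tendsto_nhds_unique_of_frequently_eq hlim tendsto_const_nhds
      ((hfreq.and_eventually self_mem_nhdsWithin).mono ?_)
    rintro r ⟨hr_eq, hr_pos⟩
    rw [← hr_eq, ENNReal.div_self (hpos r hr_pos) (measure_ne_top _ _)]
    rfl
  · -- `P` charges `v = u`, so the ball of radius `0` is one of the balls compared in `hball`.
    have hmass : P {u} = Q {u} := by
      by_contra hne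
      exact hatom (measure_mono_null (by simpa using hne) (ae_iff.1 hball))
    have hlim' := ENNReal.Tendsto.div (tendsto_measure_closedBall_nhdsGT_zero Q u) (.inr hatom)
      (tendsto_measure_closedBall_nhdsGT_zero P u) (.inl (measure_ne_top _ _))
    rw [tendsto_nhds_unique hlim hlim', ← hmass, ENNReal.div_self hatom (measure_ne_top _ _)]
    rfl

theorem eq_of_ae_measure_closedBall_eq [IsProbabilityMeasure P] [IsProbabilityMeasure Q]
    (h : ∀ᵐ u ∂P, ∀ᵐ v ∂P,
      P (Metric.closedBall u (dist v u)) = Q (Metric.closedBall u (dist v u))) :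
    P = Q := by
  refine Measure.eq_of_le_of_isProbabilityMeasure ?_
  calc P = P.withDensity (Q.rnDeriv P) := by
        rw [withDensity_congr_ae (rnDeriv_ae_eq_one_of_ae_measure_closedBall_eq h),
          withDensity_one]
    _ ≤ Q := Measure.withDensity_rnDeriv_le Q P

end Balls

section SqBallGap

variable {E : Type*} [PseudoMetricSpace E] [MeasurableSpace E]

/-- The integrand `(P(B̄(u, ‖u - v‖)) - Q(B̄(u, ‖u - v‖)))²` of the ball divergence, as a function
of the pair `(u, v)`. -/
def sqBallGap (P Q : Measure E) (w : E × E) : ℝ :=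
  (P.real (Metric.closedBall w.1 (dist w.2 w.1)) -
    Q.real (Metric.closedBall w.1 (dist w.2 w.1))) ^ 2

theorem sqBallGap_nonneg (P Q : Measure E) (w : E × E) : 0 ≤ sqBallGap P Q w :=
  sq_nonneg _

theorem sqBallGap_le_one (P Q : Measure E) [IsProbabilityMeasure P] [IsProbabilityMeasure Q]
    (w : E × E) : sqBallGap P Q w ≤ 1 := by
  rw [sqBallGap, sq_le_one_iff_abs_le_one]
  exact abs_sub_le_of_nonneg_of_le measureReal_nonneg measureReal_le_one measureReal_nonneg
    measureReal_le_one

variable [OpensMeasurableSpace E] [SecondCountableTopology E]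

theorem measurable_kernel_closedBall_dist {α : Type*} [MeasurableSpace α] (κ : Kernel α E)
    [IsSFiniteKernel κ] :
    Measurable fun t : α × E × E ↦ κ t.1 (Metric.closedBall t.2.1 (dist t.2.2 t.2.1)) := by
  have hball : MeasurableSet {q : (α × E × E) × E | dist q.2 q.1.2.1 ≤ dist q.1.2.2 q.1.2.1} :=
    measurableSet_le (by fun_prop) (by fun_prop)
  exact Kernel.measurable_kernel_prodMk_left (κ := κ.comap Prod.fst measurable_fst) hball

theorem measurable_sqBallGap_kernel {α : Type*} [MeasurableSpace α] (κ η : Kernel α E)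
    [IsSFiniteKernel κ] [IsSFiniteKernel η] :
    Measurable fun t : α × E × E ↦ sqBallGap (κ t.1) (η t.1) t.2 :=
  ((measurable_kernel_closedBall_dist κ).ennreal_toReal.sub
    (measurable_kernel_closedBall_dist η).ennreal_toReal).pow_const 2

theorem measurable_sqBallGap (P Q : Measure E) [SFinite P] [SFinite Q] :
    Measurable (sqBallGap P Q) := by
  have hconst := measurable_sqBallGap_kernel (Kernel.const Unit P) (Kernel.const Unit Q)
  simpa only [Kernel.const_apply, Function.comp_def] using
    hconst.comp (measurable_prodMk_left (x := ()))

theorem integrable_sqBallGap (P Q : Measure E) [IsProbabilityMeasure P] [IsProbabilityMeasure Q]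
    (ρ : Measure (E × E)) [IsFiniteMeasure ρ] : Integrable (sqBallGap P Q) ρ := by
  refine .of_bound (measurable_sqBallGap P Q).aestronglyMeasurable 1 (.of_forall fun w ↦ ?_)
  rw [Real.norm_of_nonneg (sqBallGap_nonneg P Q w)]
  exact sqBallGap_le_one P Q w

theorem integral_sqBallGap_le_one (P Q : Measure E) [IsProbabilityMeasure P]
    [IsProbabilityMeasure Q] (ρ : Measure (E × E)) [IsProbabilityMeasure ρ] :
    ∫ w, sqBallGap P Q w ∂ρ ≤ 1 := by
  simpa using integral_mono (integrable_sqBallGap P Q ρ) (integrable_const 1)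
    (sqBallGap_le_one P Q)

end SqBallGap

section BallDiv

variable {d : ℕ} (P Q : Measure (Euc d))

theorem ballDiv_nonneg : 0 ≤ ballDiv P Q := by
  unfold ballDiv
  positivity

theorem ballDiv_self : ballDiv P P = 0 := by
  simp [ballDiv]

variable [IsProbabilityMeasure P] [IsProbabilityMeasure Q]

theorem ballDiv_eq_integral_sqBallGap :
    ballDiv P Q = ∫ w, sqBallGap P Q w ∂(P.prod P) + ∫ w, sqBallGap P Q w ∂(Q.prod Q) := by
  rw [integral_prod _ (integrable_sqBallGap P Q _), integral_prod _ (integrable_sqBallGap P Q _)]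
  rfl

theorem ballDiv_le_two : ballDiv P Q ≤ 2 := by
  rw [ballDiv_eq_integral_sqBallGap]
  linarith [integral_sqBallGap_le_one P Q (P.prod P), integral_sqBallGap_le_one P Q (Q.prod Q)]

variable {P Q}

theorem ae_measure_closedBall_eq_of_ballDiv_eq_zero (h : ballDiv P Q = 0) :
    ∀ᵐ u ∂P, ∀ᵐ v ∂P,
      P (Metric.closedBall u (dist v u)) = Q (Metric.closedBall u (dist v u)) := by
  rw [ballDiv_eq_integral_sqBallGap,
    add_eq_zero_iff_of_nonneg (integral_nonneg (sqBallGap_nonneg P Q))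
      (integral_nonneg (sqBallGap_nonneg P Q)),
    integral_eq_zero_iff_of_nonneg (sqBallGap_nonneg P Q) (integrable_sqBallGap P Q _)] at h
  filter_upwards [Measure.ae_ae_of_ae_prod h.1] with u hu
  filter_upwards [hu] with v hv
  exact (measureReal_eq_measureReal_iff).1 (sub_eq_zero.1 (pow_eq_zero_iff two_ne_zero |>.1 hv))

theorem ballDiv_eq_zero_iff : ballDiv P Q = 0 ↔ P = Q :=
  ⟨fun h ↦ eq_of_ae_measure_closedBall_eq (ae_measure_closedBall_eq_of_ballDiv_eq_zero h),
    fun h ↦ h ▸ ballDiv_self P⟩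

variable {α : Type*} [MeasurableSpace α] (κ η : Kernel α (Euc d)) [IsMarkovKernel κ]
  [IsMarkovKernel η]

theorem measurable_ballDiv_kernel : Measurable fun t ↦ ballDiv (κ t) (η t) := by
  have hint (ν : Kernel α (Euc d)) [IsMarkovKernel ν] :
      Measurable fun t ↦ ∫ w, sqBallGap (κ t) (η t) w ∂(ν ×ₖ ν) t :=
    ((measurable_sqBallGap_kernel κ η).stronglyMeasurable.integral_kernel_prod_right').measurable
  simpa only [ballDiv_eq_integral_sqBallGap, Kernel.prod_apply] using! (hint κ).add (hint η)

variable {ν : Measure α} {c : α → ℝ}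

theorem integrable_ballDiv_kernel_mul (hc : Integrable c ν) :
    Integrable (fun t ↦ ballDiv (κ t) (η t) * c t) ν := by
  refine hc.bdd_mul (c := 2) (measurable_ballDiv_kernel κ η).aestronglyMeasurable
    (.of_forall fun t ↦ ?_)
  rw [Real.norm_of_nonneg (ballDiv_nonneg _ _)]
  exact ballDiv_le_two _ _

theorem integral_ballDiv_kernel_mul_eq_zero_iff (hc : Integrable c ν) (hc_pos : ∀ᵐ t ∂ν, 0 < c t) :
    ∫ t, ballDiv (κ t) (η t) * c t ∂ν = 0 ↔ κ =ᵐ[ν] η := by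
  have hnonneg : 0 ≤ᵐ[ν] fun t ↦ ballDiv (κ t) (η t) * c t :=
    hc_pos.mono fun t ht ↦ mul_nonneg (ballDiv_nonneg _ _) ht.le
  rw [integral_eq_zero_iff_of_nonneg_ae hnonneg (integrable_ballDiv_kernel_mul κ η hc)]
  refine eventually_congr (hc_pos.mono fun t ht ↦ ?_)
  rw [Pi.zero_apply, mul_eq_zero_iff_right ht.ne', ballDiv_eq_zero_iff]

end BallDiv

section ConditionalIndependence

variable {Ω α β γ : Type*} [MeasurableSpace Ω] [MeasurableSpace α]
  [MeasurableSpace β] [MeasurableSpace γ]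

theorem map_prodMap_compProd (ν : Measure β) [SFinite ν] (κ : Kernel β α) [IsSFiniteKernel κ]
    (e : β ≃ᵐ γ) :
    (ν ⊗ₘ κ).map (Prod.map e id) = ν.map e ⊗ₘ κ.comap e.symm e.symm.measurable := by
  ext s hs
  have he : Measurable (Prod.map e (id : α → α)) := e.measurable.prodMap measurable_id
  rw [Measure.map_apply he hs, Measure.compProd_apply (he hs), Measure.compProd_apply hs,
    lintegral_map_equiv]
  simp [Set.preimage_preimage]

variable [StandardBorelSpace α] [Nonempty α] {μ : Measure Ω} [IsFiniteMeasure μ]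
  {X : Ω → α} {Y : Ω → β} {Z : Ω → γ}

theorem condDistrib_measurableEquiv_comp (hX : Measurable X) (hY : Measurable Y) (e : β ≃ᵐ γ) :
    condDistrib X (e ∘ Y) μ =ᵐ[μ.map (e ∘ Y)]
      (condDistrib X Y μ).comap e.symm e.symm.measurable := by
  refine condDistrib_ae_eq_of_measure_eq_compProd _ hX.aemeasurable ?_
  calc μ.map (fun ω ↦ ((e ∘ Y) ω, X ω))
      = (μ.map fun ω ↦ (Y ω, X ω)).map (Prod.map e id) := by
        rw [Measure.map_map (e.measurable.prodMap measurable_id) (hY.prodMk hX)]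
        rfl
    _ = (μ.map Y ⊗ₘ condDistrib X Y μ).map (Prod.map e id) := by
        rw [compProd_map_condDistrib hX.aemeasurable]
    _ = μ.map (e ∘ Y) ⊗ₘ (condDistrib X Y μ).comap e.symm e.symm.measurable := by
        rw [map_prodMap_compProd, Measure.map_map e.measurable hY]

theorem condIndepFun_iff_condDistrib_prod_ae_eq_prodMkLeft [StandardBorelSpace Ω]
    [StandardBorelSpace β] [Nonempty β]
    (hX : Measurable X) (hY : Measurable Y) (hZ : Measurable Z) :
    CondIndepFun (MeasurableSpace.comap Z inferInstance) hZ.comap_le X Y μ ↔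
      condDistrib X (fun ω ↦ (Y ω, Z ω)) μ =ᵐ[μ.map fun ω ↦ (Y ω, Z ω)]
        (condDistrib X Z μ).prodMkLeft β := by
  let swap : γ × β ≃ᵐ β × γ := MeasurableEquiv.prodComm
  have hswap : condDistrib X (fun ω ↦ (Y ω, Z ω)) μ =ᵐ[μ.map fun ω ↦ (Y ω, Z ω)]
      (condDistrib X (fun ω ↦ (Z ω, Y ω)) μ).comap swap.symm swap.symm.measurable :=
    condDistrib_measurableEquiv_comp hX (hZ.prodMk hY) swap
  have hmap : μ.map (fun ω ↦ (Y ω, Z ω)) = (μ.map fun ω ↦ (Z ω, Y ω)).map swap :=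
    (Measure.map_map swap.measurable (hZ.prodMk hY)).symm
  rw [hswap.congr_left, hmap, EventuallyEq, swap.measurableEmbedding.ae_map_iff]
  exact (Iff.intro .symm .symm).trans (condIndepFun_iff_condDistrib_prod_ae_eq_prodMkRight hX hY hZ)

end ConditionalIndependence

section MarginalDensity

variable {α β : Type*} [MeasurableSpace α] [MeasurableSpace β] {ρ : Measure α} {ν : Measure β}
  [SFinite ρ] [SFinite ν]

theorem snd_withDensity_prod {f : α × β → ℝ≥0∞} (hf : Measurable f) :
    ((ρ.prod ν).withDensity f).snd = ν.withDensity fun y ↦ ∫⁻ x, f (x, y) ∂ρ := by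
  ext s hs
  have hs' : MeasurableSet (Prod.snd ⁻¹' s : Set (α × β)) := measurable_snd hs
  rw [Measure.snd_apply hs, withDensity_apply _ hs', withDensity_apply _ hs,
    ← Set.univ_prod, ← Measure.prod_restrict, Measure.restrict_univ,
    lintegral_prod_symm' _ hf]

theorem ae_snd_withDensity_ofReal_integral_pos {f : α × β → ℝ} (hf : Measurable f)
    (hf0 : 0 ≤ f) [IsFiniteMeasure ((ρ.prod ν).withDensity fun w ↦ ENNReal.ofReal (f w))] :
    ∀ᵐ y ∂((ρ.prod ν).withDensity fun w ↦ ENNReal.ofReal (f w)).snd,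
      0 < ∫ x, f (x, y) ∂ρ := by
  have hmarg : Measurable fun y ↦ ∫⁻ x, ENNReal.ofReal (f (x, y)) ∂ρ :=
    hf.ennreal_ofReal.lintegral_prod_left'
  have hfin : ∀ᵐ y ∂ν, ∫⁻ x, ENNReal.ofReal (f (x, y)) ∂ρ < ∞ := by
    refine ae_lt_top hmarg ?_
    rw [← lintegral_prod_symm' _ hf.ennreal_ofReal, ← setLIntegral_univ,
      ← withDensity_apply _ .univ]
    exact measure_ne_top _ _
  rw [snd_withDensity_prod hf.ennreal_ofReal, ae_withDensity_iff hmarg]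
  filter_upwards [hfin] with y hy hne
  rw [integral_eq_lintegral_of_nonneg_ae (.of_forall fun x ↦ hf0 (x, y))
    (hf.comp measurable_prodMk_right).aestronglyMeasurable]
  exact ENNReal.toReal_pos hne hy.ne

theorem ae_map_prodMk_margYZ_pos {dX dY dZ : ℕ} {Ω : Type*} [MeasurableSpace Ω] {μ : Measure Ω}
    [IsFiniteMeasure μ] {X : Ω → Euc dX} {Y : Ω → Euc dY} {Z : Ω → Euc dZ}
    (hX : Measurable X) {p : Euc dX → Euc dY → Euc dZ → ℝ}
    (hp_meas : Measurable fun v : Euc dX × Euc dY × Euc dZ ↦ p v.1 v.2.1 v.2.2)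
    (hp_nonneg : ∀ x y z, 0 ≤ p x y z)
    (hlaw : μ.map (fun ω ↦ (X ω, Y ω, Z ω)) =
      volume.withDensity fun v ↦ ENNReal.ofReal (p v.1 v.2.1 v.2.2)) :
    ∀ᵐ w ∂(μ.map fun ω ↦ (Y ω, Z ω)), 0 < margYZ p w.1 w.2 := by
  rw [Measure.volume_eq_prod] at hlaw
  have : IsFiniteMeasure ((volume.prod volume).withDensity
      fun v : Euc dX × Euc dY × Euc dZ ↦ ENNReal.ofReal (p v.1 v.2.1 v.2.2)) :=
    hlaw ▸ inferInstance
  rw [← Measure.snd_map_prodMk hX (Y := fun ω ↦ (Y ω, Z ω)), hlaw]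
  exact ae_snd_withDensity_ofReal_integral_pos hp_meas fun v ↦ hp_nonneg v.1 v.2.1 v.2.2

end MarginalDensity

theorem condBallDiv_nonneg_and_eq_zero_iff_condIndep_general {d : ℕ} {Ω β γ : Type*}
    [MeasurableSpace Ω] [StandardBorelSpace Ω] [MeasurableSpace β] [StandardBorelSpace β]
    [MeasurableSpace γ] (μ : Measure Ω) [IsProbabilityMeasure μ]
    (X : Ω → Euc d) (Y : Ω → β) (Z : Ω → γ)
    (hX : Measurable X) (hY : Measurable Y) (hZ : Measurable Z) (a : β → γ → ℝ)
    (ha_int : Integrable (fun w : β × γ ↦ a w.1 w.2) (μ.map fun ω ↦ (Y ω, Z ω)))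
    (ha_pos : ∀ᵐ w ∂(μ.map fun ω ↦ (Y ω, Z ω)), 0 < a w.1 w.2) :
    0 ≤ ∫ ω, ballDiv (condDistrib X (fun ω' ↦ (Y ω', Z ω')) μ (Y ω, Z ω))
          (condDistrib X Z μ (Z ω)) * a (Y ω) (Z ω) ∂μ ∧
      ((∫ ω, ballDiv (condDistrib X (fun ω' ↦ (Y ω', Z ω')) μ (Y ω, Z ω))
          (condDistrib X Z μ (Z ω)) * a (Y ω) (Z ω) ∂μ) = 0 ↔
        CondIndepFun (MeasurableSpace.comap Z inferInstance) hZ.comap_le X Y μ) := by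
  have : Nonempty β := (nonempty_of_isProbabilityMeasure μ).map Y
  let κ : Kernel (β × γ) (Euc d) := condDistrib X (fun ω ↦ (Y ω, Z ω)) μ
  let η : Kernel (β × γ) (Euc d) := (condDistrib X Z μ).prodMkLeft β
  have hint_law : ∫ w, ballDiv (κ w) (η w) * a w.1 w.2 ∂(μ.map fun ω ↦ (Y ω, Z ω)) =
      ∫ ω, ballDiv (κ (Y ω, Z ω)) (η (Y ω, Z ω)) * a (Y ω) (Z ω) ∂μ :=
    integral_map (hY.prodMk hZ).aemeasurable
      (integrable_ballDiv_kernel_mul κ η ha_int).aestronglyMeasurable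
  refine ⟨integral_nonneg_of_ae ((ae_of_ae_map (hY.prodMk hZ).aemeasurable ha_pos).mono
    fun ω hω ↦ mul_nonneg (ballDiv_nonneg _ _) hω.le), ?_⟩
  rw [condIndepFun_iff_condDistrib_prod_ae_eq_prodMkLeft hX hY hZ,
    ← integral_ballDiv_kernel_mul_eq_zero_iff κ η ha_int ha_pos, hint_law]
  rfl

/-- For any bounded measurable weight function `a ≥ 0` which is positive on the
support of `p_{Y,Z}`, the conditional ball divergence
`ζ_a(X, Y | Z) = E[Θ²(P_{X|Y,Z}, P_{X|Z}) a(Y,Z)]` is nonnegative, and it vanishes if and only if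
`X` and `Y` are conditionally independent given `Z`.  (The characterization `Θ²(P,Q) = 0 ↔ P = Q`
of the ball divergence, due to Pan et al., is taken as a hypothesis.) -/
theorem condBallDiv_nonneg_and_eq_zero_iff_condIndep
    {dX dY dZ : ℕ} {Ω : Type} [MeasurableSpace Ω] [StandardBorelSpace Ω] [Nonempty Ω]
    (μ : Measure Ω) [IsProbabilityMeasure μ]
    (X : Ω → Euc dX) (Y : Ω → Euc dY) (Z : Ω → Euc dZ)
    (hX : Measurable X) (hY : Measurable Y) (hZ : Measurable Z)
    -- the joint distribution has density `p` with respect to Lebesgue measure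
    (p : Euc dX → Euc dY → Euc dZ → ℝ)
    (hp_meas : Measurable fun v : Euc dX × Euc dY × Euc dZ => p v.1 v.2.1 v.2.2)
    (hp_nonneg : ∀ x y z, 0 ≤ p x y z)
    (hlaw : μ.map (fun ω => (X ω, Y ω, Z ω))
      = volume.withDensity fun v => ENNReal.ofReal (p v.1 v.2.1 v.2.2))
    -- the weight function: bounded, measurable, nonnegative, positive on the support of `p_{Y,Z}`
    (a : Euc dY → Euc dZ → ℝ)
    (ha_meas : Measurable fun w : Euc dY × Euc dZ => a w.1 w.2)
    (ha_nonneg : ∀ y z, 0 ≤ a y z) (ha_bdd : ∃ C : ℝ, ∀ y z, a y z ≤ C)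
    (ha_pos : ∀ y z, 0 < margYZ p y z → 0 < a y z)
    -- the distribution-characterizing property of the ball divergence (Pan et al.)
    (hBD : ∀ P Q : Measure (Euc dX), IsProbabilityMeasure P → IsProbabilityMeasure Q →
      (ballDiv P Q = 0 ↔ P = Q)) :
    0 ≤ ∫ ω, ballDiv (condDistrib X (fun ω' => (Y ω', Z ω')) μ (Y ω, Z ω))
          (condDistrib X Z μ (Z ω)) * a (Y ω) (Z ω) ∂μ ∧
      ((∫ ω, ballDiv (condDistrib X (fun ω' => (Y ω', Z ω')) μ (Y ω, Z ω))
          (condDistrib X Z μ (Z ω)) * a (Y ω) (Z ω) ∂μ) = 0 ↔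
        CondIndepFun (MeasurableSpace.comap Z inferInstance) hZ.comap_le X Y μ) := by
  obtain ⟨C, hC⟩ := ha_bdd
  have ha_int : Integrable (fun w : Euc dY × Euc dZ ↦ a w.1 w.2) (μ.map fun ω ↦ (Y ω, Z ω)) :=
    .of_bound ha_meas.aestronglyMeasurable C (.of_forall fun w ↦
      (Real.norm_of_nonneg (ha_nonneg w.1 w.2)).trans_le (hC w.1 w.2))
  exact condBallDiv_nonneg_and_eq_zero_iff_condIndep_general μ X Y Z hX hY hZ a ha_int
    ((ae_map_prodMk_margYZ_pos hX hp_meas hp_nonneg hlaw).mono fun w ↦ ha_pos w.1 w.2)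

end
end

section
/- For any Borel probability measures F and G on ℝ^d, the ball divergence satisfies Θ²(F,G) ≤ ∫ Θ²(δ_w, G) dF(w), where δ_w denotes the Dirac point mass at w. -/
open MeasureTheory ProbabilityTheory Filter
open scoped ENNReal NNReal Topology

noncomputable section

/-!
Write `F_B`, `G_B` for the masses of `B = B̄(u, d(u, v))`. The indicator `δ_w(B)` has mean `F_B` and
variance `F_B (1 - F_B)` under `w ∼ F`, so the `G ⊗ G` part of `∫ Θ²(δ_w, G) dF(w)` exceeds that of
`Θ²(F, G)` by `∫ F_B (1 - F_B) d(G ⊗ G)`. The `δ_w ⊗ δ_w` part is `∫ (1 - G{w})² dF(w)`, as the ball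
is then the single point `w`; for diffuse `G` it is `1` and dominates the `F ⊗ F` part of `Θ²(F, G)`
trivially. In general `(F_B - G_B)²` exceeds `(1 - G{u})²` only if `F_B < G{u}`, and this is rare:
for fixed `u` the random variable `F_B`, `v ∼ F`, is a distribution function evaluated at its own
variable, hence stochastically dominates the uniform law. The resulting excess is at most
`∫ G{u}² (1 - F{u}) dF(u) = ∑ₓ F{x} G{x}² (1 - F{x})`, and this is bounded by the contribution of
the diagonal `u = v` to `∫ F_B (1 - F_B) d(G ⊗ G)`.
-/

lemma sq_sub_le_add_mul_max {a b g p : ℝ} (hpa : p ≤ a) (ha : a ≤ 1) (hgb : g ≤ b) (hb : b ≤ 1) :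
    (a - b) ^ 2 ≤ (1 - g) ^ 2 + (2 - g - p) * max (g - a) 0 := by
  rcases le_total g a with hga | hag
  · have : (a - b) ^ 2 ≤ (1 - g) ^ 2 := sq_le_sq' (by linarith) (by linarith)
    simpa [max_eq_right (sub_nonpos.2 hga)]
  · calc (a - b) ^ 2 ≤ (1 - a) ^ 2 := sq_le_sq' (by linarith) (by linarith)
      _ = (1 - g) ^ 2 + (2 - g - a) * (g - a) := by ring
      _ ≤ (1 - g) ^ 2 + (2 - g - p) * (g - a) := by gcongr
      _ = (1 - g) ^ 2 + (2 - g - p) * max (g - a) 0 := by rw [max_eq_left (sub_nonneg.2 hag)]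

lemma integral_sq_indicator_one_sub {α : Type*} [MeasurableSpace α] (μ : Measure α)
    [IsProbabilityMeasure μ] {s : Set α} (hs : MeasurableSet s) (c : ℝ) :
    ∫ x, (s.indicator 1 x - c) ^ 2 ∂μ = (μ.real s - c) ^ 2 + μ.real s * (1 - μ.real s) := by
  have sq_linear (x : α) :
      (s.indicator 1 x - c) ^ 2 = (1 - 2 * c) * s.indicator 1 x + c ^ 2 := by
    by_cases hx : x ∈ s <;> simp only [hx, Set.indicator_of_mem, not_false_eq_true,
      Set.indicator_of_notMem, Pi.one_apply] <;> ring
  have integrable_indicator : Integrable (s.indicator (1 : α → ℝ)) μ :=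
    (integrable_const 1).indicator hs
  simp only [sq_linear]
  rw [integral_add (integrable_indicator.const_mul _) (integrable_const _), integral_const_mul,
    integral_indicator_one hs, integral_const, probReal_univ]
  ring

section Atoms

variable {α : Type*} [MeasurableSpace α]

lemma measureReal_singleton_mul_le_integral [MeasurableSingletonClass α] {μ : Measure α}
    {f : α → ℝ} (hf : Integrable f μ) (f_nonneg : 0 ≤ f) (x : α) :
    μ.real {x} * f x ≤ ∫ y, f y ∂μ :=
  calc μ.real {x} * f x = ∫ y in {x}, f y ∂μ := (integral_singleton f x).symm
    _ ≤ ∫ y, f y ∂μ := setIntegral_le_integral hf (Eventually.of_forall f_nonneg)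

variable [MeasurableEq α]

lemma measurable_measure_singleton (μ : Measure α) [SFinite μ] : Measurable fun x ↦ μ {x} := by
  convert measurable_measure_prodMk_left (ν := μ) (measurableSet_diagonal (α := α)) using 3
  ext
  simp [eq_comm]

lemma measurable_measureReal_singleton (μ : Measure α) [SFinite μ] :
    Measurable fun x ↦ μ.real {x} :=
  (measurable_measure_singleton μ).ennreal_toReal

lemma integrable_one_sub_measureReal_singleton_sq (μ ν : Measure α) [IsFiniteMeasure μ]
    [IsProbabilityMeasure ν] : Integrable (fun x ↦ (1 - ν.real {x}) ^ 2) μ :=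
  .of_mem_Icc 0 1
    ((measurable_const.sub (measurable_measureReal_singleton ν)).pow_const 2).aemeasurable
    (Eventually.of_forall fun _ ↦ ⟨sq_nonneg _, pow_le_one₀ (sub_nonneg.2 measureReal_le_one)
      (sub_le_self _ measureReal_nonneg)⟩)

lemma integrable_measureReal_singleton_sq_mul_one_sub (μ P Q : Measure α) [IsFiniteMeasure μ]
    [IsProbabilityMeasure P] [IsProbabilityMeasure Q] :
    Integrable (fun x ↦ Q.real {x} ^ 2 * (1 - P.real {x})) μ := by
  refine .of_mem_Icc 0 1 (((measurable_measureReal_singleton Q).pow_const 2).mul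
    (measurable_const.sub (measurable_measureReal_singleton P))).aemeasurable
    (Eventually.of_forall fun x ↦ ?_)
  have one_sub_nonneg : 0 ≤ 1 - P.real {x} := sub_nonneg.2 measureReal_le_one
  exact ⟨by positivity, mul_le_one₀ (pow_le_one₀ measureReal_nonneg measureReal_le_one)
    one_sub_nonneg (sub_le_self _ measureReal_nonneg)⟩

-- Both sides are the image of `μ ⊗ ν`, restricted to the diagonal, under either projection.
lemma withDensity_measure_singleton_comm (μ ν : Measure α) [SFinite μ] [SFinite ν] :
    μ.withDensity (fun x ↦ ν {x}) = ν.withDensity fun x ↦ μ {x} := by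
  ext s hs
  let diag : Set (α × α) := Set.diagonal α ∩ Prod.fst ⁻¹' s
  have measurableSet_diag : MeasurableSet diag := measurableSet_diagonal.inter (measurable_fst hs)
  have slice_fst (x : α) : ν (Prod.mk x ⁻¹' diag) = s.indicator (fun x ↦ ν {x}) x := by
    by_cases hx : x ∈ s <;> simp [diag, hx, Set.preimage]
  have slice_snd (y : α) : μ ((·, y) ⁻¹' diag) = s.indicator (fun y ↦ μ {y}) y := by
    have slice_eq : (·, y) ⁻¹' diag = {y} ∩ s := by ext; simp [diag]
    by_cases hy : y ∈ s <;> simp [slice_eq, hy]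
  calc μ.withDensity (fun x ↦ ν {x}) s = μ.prod ν diag := by
        simp only [withDensity_apply _ hs, Measure.prod_apply measurableSet_diag, slice_fst,
          lintegral_indicator hs]
    _ = ν.withDensity (fun x ↦ μ {x}) s := by
        simp only [withDensity_apply _ hs, Measure.prod_apply_symm measurableSet_diag, slice_snd,
          lintegral_indicator hs]

lemma integral_measureReal_singleton_mul_comm (μ ν : Measure α) [IsFiniteMeasure μ]
    [IsFiniteMeasure ν] (f : α → ℝ) :
    ∫ x, ν.real {x} * f x ∂μ = ∫ x, μ.real {x} * f x ∂ν := by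
  have integral_eq (μ ν : Measure α) [IsFiniteMeasure μ] [IsFiniteMeasure ν] :
      ∫ x, f x ∂(μ.withDensity fun x ↦ ν {x}) = ∫ x, ν.real {x} * f x ∂μ :=
    integral_withDensity_eq_integral_toReal_smul (measurable_measure_singleton ν)
      (Eventually.of_forall fun _ ↦ measure_lt_top _ _) f
  rw [← integral_eq, ← integral_eq, withDensity_measure_singleton_comm]

end Atoms

section Rank

variable {α β : Type*} [MeasurableSpace α] [LinearOrder β] [TopologicalSpace β]
  [OrderClosedTopology β] [SecondCountableTopology β] [MeasurableSpace β] [OpensMeasurableSpace β]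
  {f : α → β}

lemma measurableSet_comp_snd_le_comp_fst (hf : Measurable f) :
    MeasurableSet {z : α × α | f z.2 ≤ f z.1} :=
  measurableSet_le (hf.comp measurable_snd) (hf.comp measurable_fst)

lemma measurable_measureReal_setOf_le (μ : Measure α) [SFinite μ] (hf : Measurable f) :
    Measurable fun v ↦ μ.real {w | f w ≤ f v} :=
  (measurable_measure_prodMk_left (measurableSet_comp_snd_le_comp_fst hf)).ennreal_toReal

lemma integrable_measureReal_setOf_le (μ ν : Measure α) [IsFiniteMeasure μ] [IsFiniteMeasure ν]
    (hf : Measurable f) : Integrable (fun v ↦ μ.real {w | f w ≤ f v}) ν :=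
  .of_mem_Icc 0 (μ.real Set.univ) (measurable_measureReal_setOf_le μ hf).aemeasurable
    (Eventually.of_forall fun _ ↦ ⟨measureReal_nonneg, measureReal_mono (Set.subset_univ _)⟩)

-- The event `f w ≤ f v` and its image under swapping `v` and `w` cover everything.
lemma measureReal_univ_sq_le_two_mul_integral_setOf_le (μ : Measure α) [IsFiniteMeasure μ]
    (hf : Measurable f) :
    μ.real Set.univ ^ 2 ≤ 2 * ∫ v, μ.real {w | f w ≤ f v} ∂μ := by
  let ordered : Set (α × α) := {z | f z.2 ≤ f z.1}
  have hordered : MeasurableSet ordered := measurableSet_comp_snd_le_comp_fst hf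
  have real_swap : (μ.prod μ).real (Prod.swap ⁻¹' ordered) = (μ.prod μ).real ordered :=
    Measure.measurePreserving_swap.measureReal_preimage hordered.nullMeasurableSet
  have union_eq_univ : ordered ∪ Prod.swap ⁻¹' ordered = Set.univ :=
    Set.eq_univ_of_forall fun z ↦ le_total (f z.2) (f z.1)
  calc μ.real Set.univ ^ 2 = (μ.prod μ).real (ordered ∪ Prod.swap ⁻¹' ordered) := by
        rw [union_eq_univ, ← Set.univ_prod_univ, measureReal_prod_prod, sq]
    _ ≤ (μ.prod μ).real ordered + (μ.prod μ).real (Prod.swap ⁻¹' ordered) :=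
      measureReal_union_le _ _
    _ = 2 * (μ.prod μ).real ordered := by rw [real_swap, two_mul]
    _ = 2 * ∫ v, μ.real {w | f w ≤ f v} ∂μ := by
        rw [measureReal_def, Measure.prod_apply hordered, ← integral_toReal
          (measurable_measure_prodMk_left hordered).aemeasurable
          (Eventually.of_forall fun _ ↦ measure_lt_top _ _)]
        rfl

lemma measureReal_sq_le_two_mul_setIntegral_setOf_le (μ : Measure α) [IsFiniteMeasure μ]
    (hf : Measurable f) (s : Set α) :
    μ.real s ^ 2 ≤ 2 * ∫ v in s, μ.real {w | f w ≤ f v} ∂μ :=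
  calc μ.real s ^ 2 = (μ.restrict s).real Set.univ ^ 2 := by
        rw [measureReal_restrict_apply_univ]
    _ ≤ 2 * ∫ v in s, (μ.restrict s).real {w | f w ≤ f v} ∂μ :=
        measureReal_univ_sq_le_two_mul_integral_setOf_le _ hf
    _ ≤ 2 * ∫ v in s, μ.real {w | f w ≤ f v} ∂μ := by
        gcongr 2 * ?_
        exact integral_mono (integrable_measureReal_setOf_le _ _ hf)
          (integrable_measureReal_setOf_le _ _ hf) fun _ ↦
          ENNReal.toReal_mono (measure_ne_top _ _) (Measure.restrict_le_self _)

-- For a probability measure, `μ {w | f w ≤ f v}` with `v ∼ μ` stochastically dominates the uniform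
-- law on `[0, 1]`, for which equality holds when `t ∈ [0, 1]`.
lemma integral_max_sub_measureReal_le_sq_div_two (μ : Measure α) [IsFiniteMeasure μ]
    (hf : Measurable f) (t : ℝ) :
    ∫ v, max (t - μ.real {w | f w ≤ f v}) 0 ∂μ ≤ t ^ 2 / 2 := by
  set rank : α → ℝ := fun v ↦ μ.real {w | f w ≤ f v}
  let s : Set α := {v | rank v < t}
  have hs : MeasurableSet s :=
    measurableSet_lt (measurable_measureReal_setOf_le μ hf) measurable_const
  have max_eq_indicator : (fun v ↦ max (t - rank v) 0) = s.indicator fun v ↦ t - rank v := by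
    ext v
    by_cases hv : rank v < t
    · rw [Set.indicator_of_mem (show v ∈ s from hv), max_eq_left (sub_nonneg.2 hv.le)]
    · rw [Set.indicator_of_notMem (show v ∉ s from hv), max_eq_right (by linarith)]
  calc ∫ v, max (t - rank v) 0 ∂μ = μ.real s * t - ∫ v in s, rank v ∂μ := by
        rw [max_eq_indicator, integral_indicator hs, integral_sub (integrable_const _)
          (integrable_measureReal_setOf_le _ _ hf), setIntegral_const, smul_eq_mul]
    _ ≤ μ.real s * t - μ.real s ^ 2 / 2 := by
        linarith [measureReal_sq_le_two_mul_setIntegral_setOf_le μ hf s]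
    _ ≤ t ^ 2 / 2 := by linarith [sq_nonneg (t - μ.real s)]

end Rank

section BallMass

variable {X : Type*} [PseudoMetricSpace X] [MeasurableSpace X]

/-- The mass `μ(B̄(u, d(u, v)))` of the closed ball centred at the first point of the pair
`(u, v)` and passing through the second. -/
def ballMass (μ : Measure X) (z : X × X) : ℝ :=
  μ.real (Metric.closedBall z.1 (dist z.2 z.1))

/-- The ball divergence `Θ²(P, Q)` on a (pseudo)metric space, with the double integrals taken with
respect to the product measures `P ⊗ P` and `Q ⊗ Q`. -/
def ballDivergence (P Q : Measure X) : ℝ :=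
  (∫ z, (ballMass P z - ballMass Q z) ^ 2 ∂(P.prod P))
    + ∫ z, (ballMass P z - ballMass Q z) ^ 2 ∂(Q.prod Q)

lemma ballMass_nonneg (μ : Measure X) (z : X × X) : 0 ≤ ballMass μ z :=
  measureReal_nonneg

lemma ballMass_le_one (μ : Measure X) [IsProbabilityMeasure μ] (z : X × X) : ballMass μ z ≤ 1 :=
  measureReal_le_one

lemma measureReal_singleton_le_ballMass (μ : Measure X) [IsFiniteMeasure μ] (u v : X) :
    μ.real {u} ≤ ballMass μ (u, v) :=
  measureReal_mono (by simp)

lemma sq_ballMass_sub_le_one (P Q : Measure X) [IsProbabilityMeasure P] [IsProbabilityMeasure Q]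
    (z : X × X) : (ballMass P z - ballMass Q z) ^ 2 ≤ 1 := by
  rw [sq_le_one_iff_abs_le_one, abs_le]
  constructor <;> linarith [ballMass_nonneg P z, ballMass_le_one P z, ballMass_nonneg Q z,
    ballMass_le_one Q z]

lemma ballMass_mul_one_sub_mem_Icc (μ : Measure X) [IsProbabilityMeasure μ] (z : X × X) :
    ballMass μ z * (1 - ballMass μ z) ∈ Set.Icc 0 1 := by
  have h_nonneg := ballMass_nonneg μ z
  have h_le_one := ballMass_le_one μ z
  constructor <;> nlinarith

variable [OpensMeasurableSpace X]

lemma ballMass_dirac (w : X) (z : X × X) :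
    ballMass (Measure.dirac w) z = (Metric.closedBall z.1 (dist z.2 z.1)).indicator 1 w := by
  by_cases hw : w ∈ Metric.closedBall z.1 (dist z.2 z.1) <;>
    simp [ballMass, measureReal_def,
      Measure.dirac_apply' _ Metric.isClosed_closedBall.measurableSet, hw]

lemma integral_sq_ballMass_dirac_sub (μ : Measure X) [IsProbabilityMeasure μ] (z : X × X)
    (c : ℝ) :
    ∫ w, (ballMass (Measure.dirac w) z - c) ^ 2 ∂μ
      = (ballMass μ z - c) ^ 2 + ballMass μ z * (1 - ballMass μ z) := by
  simp only [ballMass_dirac]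
  exact integral_sq_indicator_one_sub μ Metric.isClosed_closedBall.measurableSet c

lemma mul_integral_max_sub_ballMass_le (F : Measure X) [IsProbabilityMeasure F] (u : X)
    (t : ℝ) :
    (2 - t - F.real {u}) * ∫ v, max (t - ballMass F (u, v)) 0 ∂F
      ≤ t ^ 2 * (1 - F.real {u}) := by
  have one_sub_nonneg : 0 ≤ 1 - F.real {u} := sub_nonneg.2 measureReal_le_one
  rcases le_total t (F.real {u}) with ht | ht
  · have max_eq_zero (v : X) : max (t - ballMass F (u, v)) 0 = 0 :=
      max_eq_right (sub_nonpos.2 (ht.trans (measureReal_singleton_le_ballMass F u v)))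
    simp only [max_eq_zero, integral_zero, mul_zero]
    positivity
  · have integral_le : ∫ v, max (t - ballMass F (u, v)) 0 ∂F ≤ t ^ 2 / 2 :=
      integral_max_sub_measureReal_le_sq_div_two (f := (dist · u)) F
        (continuous_id.dist continuous_const).measurable t
    calc (2 - t - F.real {u}) * ∫ v, max (t - ballMass F (u, v)) 0 ∂F
        ≤ (2 * (1 - F.real {u})) * ∫ v, max (t - ballMass F (u, v)) 0 ∂F := by
          refine mul_le_mul_of_nonneg_right (by linarith) ?_
          exact integral_nonneg fun _ ↦ le_max_right _ _
      _ ≤ (2 * (1 - F.real {u})) * (t ^ 2 / 2) := by gcongr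
      _ = t ^ 2 * (1 - F.real {u}) := by ring

lemma integral_sq_ballMass_sub_le (F G : Measure X) [IsProbabilityMeasure F]
    [IsProbabilityMeasure G] (u : X) :
    ∫ v, (ballMass F (u, v) - ballMass G (u, v)) ^ 2 ∂F
      ≤ (1 - G.real {u}) ^ 2 + G.real {u} ^ 2 * (1 - F.real {u}) := by
  have integrable_ballMass : Integrable (fun v ↦ ballMass F (u, v)) F :=
    integrable_measureReal_setOf_le (f := (dist · u)) F F
      (continuous_id.dist continuous_const).measurable
  have integrable_max : Integrable (fun v ↦ max (G.real {u} - ballMass F (u, v)) 0) F :=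
    ((integrable_const _).sub integrable_ballMass).pos_part
  calc ∫ v, (ballMass F (u, v) - ballMass G (u, v)) ^ 2 ∂F
      ≤ ∫ v, ((1 - G.real {u}) ^ 2
          + (2 - G.real {u} - F.real {u}) * max (G.real {u} - ballMass F (u, v)) 0) ∂F :=
        integral_mono_of_nonneg (Eventually.of_forall fun _ ↦ sq_nonneg _)
          ((integrable_const _).add (integrable_max.const_mul _))
          (Eventually.of_forall fun v ↦ sq_sub_le_add_mul_max
            (measureReal_singleton_le_ballMass F u v) (ballMass_le_one F _)
            (measureReal_singleton_le_ballMass G u v) (ballMass_le_one G _))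
    _ = (1 - G.real {u}) ^ 2 + (2 - G.real {u} - F.real {u})
          * ∫ v, max (G.real {u} - ballMass F (u, v)) 0 ∂F := by
        rw [integral_add (integrable_const _) (integrable_max.const_mul _), integral_const,
          probReal_univ, one_smul, integral_const_mul]
    _ ≤ (1 - G.real {u}) ^ 2 + G.real {u} ^ 2 * (1 - F.real {u}) := by
        gcongr _ + ?_
        exact mul_integral_max_sub_ballMass_le F u _

variable [SecondCountableTopology X]

lemma measurable_ballMass (μ : Measure X) [SFinite μ] : Measurable (ballMass μ) := by
  have measurableSet_ball :
      MeasurableSet {p : (X × X) × X | dist p.2 p.1.1 ≤ dist p.1.2 p.1.1} :=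
    measurableSet_le (by fun_prop) (by fun_prop)
  exact (measurable_measure_prodMk_left measurableSet_ball).ennreal_toReal

lemma measurable_ballMass_dirac :
    Measurable fun p : X × (X × X) ↦ ballMass (Measure.dirac p.1) p.2 := by
  have measurableSet_ball :
      MeasurableSet {p : X × (X × X) | dist p.1 p.2.1 ≤ dist p.2.2 p.2.1} :=
    measurableSet_le (by fun_prop) (by fun_prop)
  simp only [ballMass_dirac]
  exact measurable_one.indicator measurableSet_ball

lemma integrable_sq_ballMass_sub (P Q : Measure X) [IsProbabilityMeasure P]
    [IsProbabilityMeasure Q] (π : Measure (X × X)) [IsFiniteMeasure π] :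
    Integrable (fun z ↦ (ballMass P z - ballMass Q z) ^ 2) π :=
  .of_mem_Icc 0 1 (((measurable_ballMass P).sub (measurable_ballMass Q)).pow_const 2).aemeasurable
    (Eventually.of_forall fun z ↦ ⟨sq_nonneg _, sq_ballMass_sub_le_one P Q z⟩)

lemma integrable_sq_ballMass_dirac_sub (F G : Measure X) [IsFiniteMeasure F]
    [IsProbabilityMeasure G] (π : Measure (X × X)) [IsFiniteMeasure π] :
    Integrable (fun p : X × (X × X) ↦ (ballMass (Measure.dirac p.1) p.2 - ballMass G p.2) ^ 2)
      (F.prod π) :=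
  .of_mem_Icc 0 1 ((measurable_ballMass_dirac.sub
      ((measurable_ballMass G).comp measurable_snd)).pow_const 2).aemeasurable
    (Eventually.of_forall fun p ↦ ⟨sq_nonneg _, sq_ballMass_sub_le_one _ G p.2⟩)

lemma integrable_ballMass_mul_one_sub (μ : Measure X) [IsProbabilityMeasure μ]
    (π : Measure (X × X)) [IsFiniteMeasure π] :
    Integrable (fun z ↦ ballMass μ z * (1 - ballMass μ z)) π :=
  .of_mem_Icc 0 1
    ((measurable_ballMass μ).mul (measurable_const.sub (measurable_ballMass μ))).aemeasurable
    (Eventually.of_forall (ballMass_mul_one_sub_mem_Icc μ))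

-- Bias-variance decomposition of the random measure `δ_w`, `w ∼ F`, whose mean is `F`.
lemma integral_integral_sq_ballMass_dirac_sub (F G : Measure X) [IsProbabilityMeasure F]
    [IsProbabilityMeasure G] (π : Measure (X × X)) [IsFiniteMeasure π] :
    ∫ w, ∫ z, (ballMass (Measure.dirac w) z - ballMass G z) ^ 2 ∂π ∂F
      = (∫ z, (ballMass F z - ballMass G z) ^ 2 ∂π)
        + ∫ z, ballMass F z * (1 - ballMass F z) ∂π := by
  rw [integral_integral_swap (integrable_sq_ballMass_dirac_sub F G π)]
  simp only [integral_sq_ballMass_dirac_sub]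
  exact integral_add (integrable_sq_ballMass_sub F G π) (integrable_ballMass_mul_one_sub F π)

end BallMass

section BallDivergence

variable {X : Type*} [MetricSpace X] [MeasurableSpace X]

lemma ballMass_self (μ : Measure X) (u : X) : ballMass μ (u, u) = μ.real {u} := by
  simp [ballMass]

variable [OpensMeasurableSpace X]

lemma ballDivergence_dirac (G : Measure X) (w : X) :
    ballDivergence (Measure.dirac w) G = (1 - G.real {w}) ^ 2
      + ∫ z, (ballMass (Measure.dirac w) z - ballMass G z) ^ 2 ∂(G.prod G) := by
  rw [ballDivergence, Measure.dirac_prod_dirac, integral_dirac, ballMass_self, ballMass_self]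
  simp [measureReal_def]

variable [SecondCountableTopology X]

lemma integral_ballDivergence_dirac (F G : Measure X) [IsProbabilityMeasure F]
    [IsProbabilityMeasure G] :
    ∫ w, ballDivergence (Measure.dirac w) G ∂F
      = (∫ w, (1 - G.real {w}) ^ 2 ∂F)
        + ((∫ z, (ballMass F z - ballMass G z) ^ 2 ∂(G.prod G))
          + ∫ z, ballMass F z * (1 - ballMass F z) ∂(G.prod G)) := by
  simp only [ballDivergence_dirac]
  rw [integral_add (integrable_one_sub_measureReal_singleton_sq F G)
      (integrable_sq_ballMass_dirac_sub F G _).integral_prod_left,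
    integral_integral_sq_ballMass_dirac_sub]

lemma integral_prod_sq_ballMass_sub_le (F G : Measure X) [IsProbabilityMeasure F]
    [IsProbabilityMeasure G] :
    ∫ z, (ballMass F z - ballMass G z) ^ 2 ∂(F.prod F)
      ≤ (∫ u, (1 - G.real {u}) ^ 2 ∂F) + ∫ u, G.real {u} ^ 2 * (1 - F.real {u}) ∂F := by
  have integrable_sq := integrable_sq_ballMass_sub F G (F.prod F)
  have integrable_left := integrable_one_sub_measureReal_singleton_sq F G
  have integrable_right := integrable_measureReal_singleton_sq_mul_one_sub F F G
  rw [integral_prod _ integrable_sq, ← integral_add integrable_left integrable_right]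
  exact integral_mono integrable_sq.integral_prod_left (integrable_left.add integrable_right)
    (integral_sq_ballMass_sub_le F G)

-- Restrict the right-hand side to the diagonal, where the balls are singletons.
lemma integral_measureReal_singleton_sq_mul_one_sub_le (F G : Measure X) [IsProbabilityMeasure F]
    [IsProbabilityMeasure G] :
    ∫ u, G.real {u} ^ 2 * (1 - F.real {u}) ∂F
      ≤ ∫ z, ballMass F z * (1 - ballMass F z) ∂(G.prod G) := by
  have integrable_prod := integrable_ballMass_mul_one_sub F (G.prod G)
  have diagonal_le (u : X) : F.real {u} * (G.real {u} * (1 - F.real {u}))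
      ≤ ∫ v, ballMass F (u, v) * (1 - ballMass F (u, v)) ∂G := by
    have integrable_slice :=
      (integrable_ballMass_mul_one_sub F (G.map (Prod.mk u))).comp_measurable measurable_prodMk_left
    have := measureReal_singleton_mul_le_integral integrable_slice
      (fun v ↦ (ballMass_mul_one_sub_mem_Icc F (u, v)).1) u
    simp only [Function.comp_apply, ballMass_self] at this
    linarith
  calc ∫ u, G.real {u} ^ 2 * (1 - F.real {u}) ∂F
      = ∫ u, G.real {u} * (G.real {u} * (1 - F.real {u})) ∂F := by simp only [sq, mul_assoc]
    _ = ∫ u, F.real {u} * (G.real {u} * (1 - F.real {u})) ∂G :=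
        integral_measureReal_singleton_mul_comm F G _
    _ ≤ ∫ u, ∫ v, ballMass F (u, v) * (1 - ballMass F (u, v)) ∂G ∂G :=
        integral_mono_of_nonneg
          (Eventually.of_forall fun _ ↦ mul_nonneg measureReal_nonneg
            (mul_nonneg measureReal_nonneg (sub_nonneg.2 measureReal_le_one)))
          integrable_prod.integral_prod_left (Eventually.of_forall diagonal_le)
    _ = ∫ z, ballMass F z * (1 - ballMass F z) ∂(G.prod G) := (integral_prod _ integrable_prod).symm

theorem ballDiv_le_integral_ballDiv_dirac_general (F G : Measure X) [IsProbabilityMeasure F]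
    [IsProbabilityMeasure G] :
    ballDivergence F G ≤ ∫ w, ballDivergence (Measure.dirac w) G ∂F := by
  rw [integral_ballDivergence_dirac, ballDivergence]
  linarith [integral_prod_sq_ballMass_sub_le F G,
    integral_measureReal_singleton_sq_mul_one_sub_le F G]

end BallDivergence

lemma ballDiv_eq_ballDivergence {d : ℕ} (P Q : Measure (Euc d)) [IsProbabilityMeasure P]
    [IsProbabilityMeasure Q] : ballDiv P Q = ballDivergence P Q := by
  rw [ballDivergence, integral_prod _ (integrable_sq_ballMass_sub P Q _),
    integral_prod _ (integrable_sq_ballMass_sub P Q _)]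
  rfl

/-- For Borel probability measures `F, G` on `ℝ^d`, the ball divergence
satisfies `Θ²(F, G) ≤ ∫ Θ²(δ_w, G) dF(w)`, where `δ_w` is the Dirac point mass at `w`. -/
theorem ballDiv_le_integral_ballDiv_dirac {d : ℕ} (F G : Measure (Euc d))
    [IsProbabilityMeasure F] [IsProbabilityMeasure G] :
    ballDiv F G ≤ ∫ w, ballDiv (Measure.dirac w) G ∂F := by
  simp only [ballDiv_eq_ballDivergence]
  exact ballDiv_le_integral_ballDiv_dirac_general F G

end
end
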